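/- arXiv:0711.2164 — 4 statements merged into one kernel-verified Lean document; each statement's English description precedes it below -/
import Mathlib

section
/- (Uniform convergence theorem) Let φ : [1,∞) → (0,∞) be a function of the class 𝓜. Then for any fixed 0 < a ≤ b < ∞ with a ≥ 1 (or after restricting so that λt ≥ 1), the convergence φ(λt)/φ(t) → 1 as t → +∞ is uniform in λ on the interval [a,b]; that is, sup_{λ ∈ [a,b]} |φ(λt)/φ(t) − 1| → 0 as t → +∞. -/
open MeasureTheory Filter Topology

/-- The class `𝓜` of Borel measurable functions `φ : [1,∞) → (0,∞)` such that `φ` and `1/φ`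
are bounded on every interval `[1,b]`, `1 < b < ∞`, and `φ` is slowly varying at `+∞`
in Karamata's sense. (We model `φ` as a function on all of `ℝ`; only its values on
`[1,∞)` matter.) -/
def SlowlyVaryingM (φ : ℝ → ℝ) : Prop :=
  Measurable φ ∧
  (∀ t : ℝ, 1 ≤ t → 0 < φ t) ∧
  (∀ b : ℝ, 1 < b → ∃ C : ℝ, 0 < C ∧ ∀ t ∈ Set.Icc (1:ℝ) b, φ t ≤ C ∧ 1 / φ t ≤ C) ∧
  (∀ lam : ℝ, 0 < lam → Tendsto (fun t : ℝ => φ (lam * t) / φ t) atTop (𝓝 1))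

/-!
Put `h x = log (φ (exp x))`, so that slow variation of `φ` says that `h (x + u) - h x → 0` as
`x → ∞` for each `u`. On sets of finite measure this convergence also holds in measure. Given `u`
in a compact set `K` and a compact neighbourhood `W` of `0`, the points `w ∈ W` for which one of
`h (x + u + w) - h x` and `h (x + u + w) - h (x + u)` is not small fill at most a small part of
`W`, uniformly in `u`. Any other `w ∈ W` shows that `h (x + u) - h x` is small.
-/

section InMeasure

variable {α ι E : Type*} [MeasurableSpace α] {μ : Measure α} [PseudoEMetricSpace E]

theorem tendstoInMeasure_of_tendsto_ae_of_isCountablyGenerated [IsFiniteMeasure μ]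
    {l : Filter ι} [l.IsCountablyGenerated] {F : ι → α → E} {g : α → E}
    (hF : ∀ i, AEStronglyMeasurable (F i) μ)
    (hlim : ∀ᵐ a ∂μ, Tendsto (fun i ↦ F i a) l (𝓝 (g a))) :
    TendstoInMeasure μ F l g := by
  intro ε hε
  refine tendsto_of_seq_tendsto fun i hi ↦ ?_
  have hseq : ∀ᵐ a ∂μ, Tendsto (fun n ↦ F (i n) a) atTop (𝓝 (g a)) := by
    filter_upwards [hlim] with a ha using ha.comp hi
  exact tendstoInMeasure_of_tendsto_ae (fun n ↦ hF (i n)) hseq ε hε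

end InMeasure

section Translation

open scoped Pointwise

variable {G E : Type*} [AddGroup G] [MeasurableSpace G] [MeasurableAdd G] {μ : Measure G}
  [μ.IsAddLeftInvariant]

theorem exists_mem_add_notMem_notMem {A B W : Set G} (h : μ A + μ B < μ W) (u : G) :
    ∃ w ∈ W, u + w ∉ A ∧ w ∉ B := by
  by_contra! hcover
  have hsub : W ⊆ (u + ·) ⁻¹' A ∪ B := fun w hw ↦ or_iff_not_imp_left.2 (hcover w hw)
  refine h.not_ge ?_
  calc μ W ≤ μ ((u + ·) ⁻¹' A) + μ B := (measure_mono hsub).trans (measure_union_le _ _)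
    _ = μ A + μ B := by rw [measure_preimage_add]

variable [SeminormedAddCommGroup E] {f : G → E} {l : Filter G} [l.IsCountablyGenerated]

theorem tendsto_measure_le_norm_translate_sub_inter (hf : AEStronglyMeasurable f μ)
    (hlim : ∀ᵐ u ∂μ, Tendsto (fun x ↦ f (x + u) - f x) l (𝓝 0))
    {S : Set G} (hS : μ S ≠ ⊤) {ε : ℝ} (hε : 0 < ε) :
    Tendsto (fun x ↦ μ ({u | ε ≤ ‖f (x + u) - f x‖} ∩ S)) l (𝓝 0) := by
  have : IsFiniteMeasure (μ.restrict S) := isFiniteMeasure_restrict.2 hS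
  have hmeas (x : G) : AEStronglyMeasurable (fun u ↦ f (x + u) - f x) (μ.restrict S) :=
    ((hf.comp_measurePreserving (measurePreserving_add_left μ x)).sub
      aestronglyMeasurable_const).restrict
  have hconv : TendstoInMeasure (μ.restrict S) (fun x u ↦ f (x + u) - f x) l fun _ ↦ 0 :=
    tendstoInMeasure_of_tendsto_ae_of_isCountablyGenerated hmeas (ae_restrict_of_ae hlim)
  have hnorm := tendstoInMeasure_iff_norm.1 hconv ε hε
  simp only [sub_zero] at hnorm
  exact tendsto_of_tendsto_of_tendsto_of_le_of_le tendsto_const_nhds hnorm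
    (fun _ ↦ zero_le) fun _ ↦ Measure.le_restrict_apply _ _

theorem tendstoUniformlyOn_translate_sub [TopologicalSpace G] [ContinuousAdd G]
    [WeaklyLocallyCompactSpace G] [μ.IsOpenPosMeasure] [IsFiniteMeasureOnCompacts μ]
    (hf : AEStronglyMeasurable f μ)
    (hlim : ∀ᵐ u ∂μ, Tendsto (fun x ↦ f (x + u) - f x) l (𝓝 0))
    {K : Set G} (hK : IsCompact K) (hl : Tendsto (fun p : G × G ↦ p.1 + p.2) (l ×ˢ 𝓟 K) l) :
    TendstoUniformlyOn (fun x u ↦ f (x + u) - f x) (fun _ ↦ 0) l K := by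
  obtain ⟨W, hW, hW0⟩ := exists_compact_mem_nhds (0 : G)
  have hWpos : 0 < μ W / 2 := ENNReal.half_pos (Measure.measure_pos_of_mem_nhds μ hW0).ne'
  rw [Metric.tendstoUniformlyOn_iff]
  intro ε hε
  let bad (x : G) : Set G := {v | ε / 2 ≤ ‖f (x + v) - f x‖}
  have hbad {S : Set G} (hS : IsCompact S) : ∀ᶠ x in l, μ (bad x ∩ S) < μ W / 2 :=
    (tendsto_measure_le_norm_translate_sub_inter hf hlim hS.measure_ne_top
      (half_pos hε)).eventually_lt_const hWpos
  have hbad_translate : ∀ᶠ x in l, ∀ u ∈ K, μ (bad (x + u) ∩ W) < μ W / 2 :=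
    eventually_prod_principal_iff.1 (hl.eventually (hbad hW))
  filter_upwards [hbad (hK.add hW), hbad_translate] with x hx hxK u hu
  have hsum : μ (bad x ∩ (K + W)) + μ (bad (x + u) ∩ W) < μ W :=
    (ENNReal.add_lt_add hx (hxK u hu)).trans_eq (ENNReal.add_halves _)
  obtain ⟨w, hw, hwx, hwu⟩ := exists_mem_add_notMem_notMem hsum u
  have hx_close : ‖f (x + u + w) - f x‖ < ε / 2 := by
    rw [add_assoc]
    exact not_le.1 fun h ↦ hwx ⟨h, Set.add_mem_add hu hw⟩
  have hxu_close : ‖f (x + u + w) - f (x + u)‖ < ε / 2 := not_le.1 fun h ↦ hwu ⟨h, hw⟩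
  rw [dist_zero_left]
  calc ‖f (x + u) - f x‖
      = ‖(f (x + u + w) - f x) - (f (x + u + w) - f (x + u))‖ := by rw [sub_sub_sub_cancel_left]
    _ ≤ ‖f (x + u + w) - f x‖ + ‖f (x + u + w) - f (x + u)‖ := norm_sub_le _ _
    _ < ε := by linarith

end Translation

theorem tendsto_add_atTop_prod_principal {R : Type*} [AddCommGroup R] [PartialOrder R]
    [IsOrderedAddMonoid R] {K : Set R} (hK : BddBelow K) :
    Tendsto (fun p : R × R ↦ p.1 + p.2) (atTop ×ˢ 𝓟 K) atTop := by
  obtain ⟨m, hm⟩ := hK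
  refine tendsto_atTop_add_right_of_le' _ m tendsto_fst ?_
  exact tendsto_snd.eventually (eventually_principal.2 fun u hu ↦ hm hu)

section SlowVariation

variable {φ : ℝ → ℝ}

theorem tendsto_log_comp_exp_add_sub (hpos : ∀ᶠ t in atTop, 0 < φ t) {u : ℝ}
    (hlim : Tendsto (fun t ↦ φ (Real.exp u * t) / φ t) atTop (𝓝 1)) :
    Tendsto (fun x ↦ Real.log (φ (Real.exp (x + u))) - Real.log (φ (Real.exp x)))
      atTop (𝓝 0) := by
  have hlog := (hlim.comp Real.tendsto_exp_atTop).log one_ne_zero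
  rw [Real.log_one] at hlog
  have hpos_exp : ∀ᶠ x in atTop, 0 < φ (Real.exp x) := Real.tendsto_exp_atTop.eventually hpos
  have hpos_exp_add : ∀ᶠ x in atTop, 0 < φ (Real.exp (x + u)) :=
    (tendsto_atTop_add_const_right atTop u tendsto_id).eventually hpos_exp
  refine hlog.congr' ?_
  filter_upwards [hpos_exp, hpos_exp_add] with x hx hxu
  rw [Function.comp_apply, ← Real.exp_add, add_comm u x, Real.log_div hxu.ne' hx.ne']

theorem tendstoUniformlyOn_log_comp_exp_add_sub (hφ : Measurable φ)
    (hpos : ∀ᶠ t in atTop, 0 < φ t)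
    (hlim : ∀ c, 0 < c → Tendsto (fun t ↦ φ (c * t) / φ t) atTop (𝓝 1))
    {K : Set ℝ} (hK : IsCompact K) :
    TendstoUniformlyOn
      (fun x u ↦ Real.log (φ (Real.exp (x + u))) - Real.log (φ (Real.exp x)))
      (fun _ ↦ 0) atTop K := by
  have hmeas : Measurable fun x ↦ Real.log (φ (Real.exp x)) := (hφ.comp Real.measurable_exp).log
  exact tendstoUniformlyOn_translate_sub (μ := volume) hmeas.aestronglyMeasurable
    (.of_forall fun u ↦ tendsto_log_comp_exp_add_sub hpos (hlim _ (Real.exp_pos u))) hK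
    (tendsto_add_atTop_prod_principal hK.bddBelow)

theorem slowly_varying_uniform_convergence_general (hφ : Measurable φ)
    (hpos : ∀ᶠ t in atTop, 0 < φ t)
    (hlim : ∀ c, 0 < c → Tendsto (fun t ↦ φ (c * t) / φ t) atTop (𝓝 1))
    {K : Set ℝ} (hK : IsCompact K) (hK0 : K ⊆ Set.Ioi 0) :
    TendstoUniformlyOn (fun t c ↦ φ (c * t) / φ t) (fun _ ↦ 1) atTop K := by
  have hlogK : IsCompact (Real.log '' K) :=
    hK.image_of_continuousOn (Real.continuousOn_log.mono fun c hc ↦ (hK0 hc).ne')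
  have hlog : Tendsto (Prod.map Real.log Real.log) (atTop ×ˢ 𝓟 K) (atTop ×ˢ 𝓟 (Real.log '' K)) :=
    Real.tendsto_log_atTop.prodMap (tendsto_principal_principal.2 fun _ ↦ Set.mem_image_of_mem _)
  have hexp := (tendsto_prod_principal_iff.2
    (tendstoUniformlyOn_log_comp_exp_add_sub hφ hpos hlim hlogK)).rexp.comp hlog
  rw [Real.exp_zero] at hexp
  have hmul : Tendsto (fun p : ℝ × ℝ ↦ Real.exp (Real.log p.1 + Real.log p.2))
      (atTop ×ˢ 𝓟 K) atTop :=
    Real.tendsto_exp_atTop.comp ((tendsto_add_atTop_prod_principal hlogK.bddBelow).comp hlog)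
  refine tendsto_prod_principal_iff.1 (hexp.congr' ?_)
  filter_upwards [tendsto_fst.eventually (eventually_gt_atTop 0), tendsto_fst.eventually hpos,
    hmul.eventually hpos, tendsto_snd.eventually (eventually_principal.2 hK0)]
    with ⟨t, c⟩ ht hφt hφct hc
  have hexp_log_add : Real.exp (Real.log t + Real.log c) = c * t := by
    rw [Real.exp_add, Real.exp_log ht, Real.exp_log hc, mul_comm]
  rw [hexp_log_add] at hφct
  calc Real.exp (Real.log (φ (Real.exp (Real.log t + Real.log c))) -
        Real.log (φ (Real.exp (Real.log t))))
      = Real.exp (Real.log (φ (c * t)) - Real.log (φ t)) := by rw [hexp_log_add, Real.exp_log ht]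
    _ = φ (c * t) / φ t := by rw [Real.exp_sub, Real.exp_log hφct, Real.exp_log hφt]

end SlowVariation

/-- Uniform convergence theorem for slowly varying functions of class `𝓜`:
`φ(λt)/φ(t) → 1` as `t → +∞` uniformly in `λ` on compact intervals `[a,b] ⊆ [1,∞)`. -/
theorem slowly_varying_uniform_convergence
    (φ : ℝ → ℝ) (hφ : SlowlyVaryingM φ) (a b : ℝ) (ha : 1 ≤ a) (hab : a ≤ b) :
    TendstoUniformlyOn (fun (t : ℝ) (lam : ℝ) => φ (lam * t) / φ t)
      (fun _ => (1 : ℝ)) atTop (Set.Icc a b) := by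
  obtain ⟨hmeas, hpos, -, hlim⟩ := hφ
  exact slowly_varying_uniform_convergence_general hmeas ((eventually_ge_atTop 1).mono hpos) hlim
    isCompact_Icc fun _ hc ↦ zero_lt_one.trans_le (ha.trans hc.1)
end

section
/- (Karamata representation) Let φ : [1,∞) → (0,∞) be a function of the class 𝓜. Then there exist a real number c and Borel measurable functions η : [1,∞) → ℝ and ε : [1,∞) → ℝ with η(t) → c and ε(t) → 0 as t → +∞, such that φ(t) = exp( η(t) + ∫₁^t ε(u)/u du ) for all t ≥ 1. -/
open MeasureTheory Filter Topology

/-!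
Passing to `h x = log (φ (exp x))` turns slow variation into `h (x + u) - h x → 0` for every `u`.
A measure argument makes this convergence uniform for `u` in a compact interval, so `h` is bounded
on the compact subintervals of some `[X, ∞)`; truncating it below `X` gives a locally integrable
`g` that equals `h` near infinity. Translating integrals,
`g x = ∫₀¹ g - ∫₀¹ (g (x + u) - g x) du + ∫₀ˣ (g (s + 1) - g s) ds`,
whose middle term tends to `0` by uniform convergence and whose last integrand tends to `0`.
The difference `h - g` vanishes near infinity and is absorbed into `η`.
-/

/-- The additive form of slow variation: `φ > 0` is slowly varying in Karamata's sense exactly when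
`fun x ↦ log (φ (exp x))` satisfies this condition. -/
def AdditivelySlowlyVarying (h : ℝ → ℝ) : Prop :=
  ∀ u, Tendsto (fun x => h (x + u) - h x) atTop (𝓝 0)

namespace AdditivelySlowlyVarying

variable {g h : ℝ → ℝ}

theorem congr' (hsv : AdditivelySlowlyVarying h) (hgh : g =ᶠ[atTop] h) :
    AdditivelySlowlyVarying g := fun u => by
  refine (hsv u).congr' ?_
  have hgh_shift : ∀ᶠ x in atTop, g (x + u) = h (x + u) :=
    (tendsto_atTop_add_const_right atTop u tendsto_id).eventually hgh
  filter_upwards [hgh, hgh_shift] with x hx hxu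
  rw [hx, hxu]

theorem tendsto_volume_le_abs_sub (hsv : AdditivelySlowlyVarying h) (hm : Measurable h)
    {B : Set ℝ} (hB : MeasurableSet B) (hB_fin : volume B ≠ ⊤) {ε : ℝ} (hε : 0 < ε) :
    Tendsto (fun x => volume ({v | ε ≤ |h (x + v) - h x|} ∩ B)) atTop (𝓝 0) := by
  rw [← measure_empty (μ := (volume : Measure ℝ))]
  refine tendsto_measure_of_tendsto_indicator atTop (fun x => ?_) hB hB_fin
    (Eventually.of_forall fun x => Set.inter_subset_right) fun v => ?_
  · exact (measurableSet_le measurable_const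
      ((hm.comp (measurable_const_add x)).sub_const _).abs).inter hB
  · have habs : Tendsto (fun x => |h (x + v) - h x|) atTop (𝓝 0) := by simpa using (hsv v).abs
    filter_upwards [habs.eventually_lt_const hε] with x hx
    simp [hx]

/-- Any `v ∈ [b, b + 1]` good for both base points `x` and `x + u` bounds `h (x + u) - h x`; one
exists because the two sets of bad `v` together have measure less than `1`. -/
theorem eventually_forall_abs_sub_lt (hsv : AdditivelySlowlyVarying h) (hm : Measurable h)
    (a b : ℝ) {ε : ℝ} (hε : 0 < ε) :
    ∀ᶠ x in atTop, ∀ u ∈ Set.Icc a b, |h (x + u) - h x| < ε := by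
  let bad (B : Set ℝ) (x : ℝ) : Set ℝ := {v | ε / 2 ≤ |h (x + v) - h x|} ∩ B
  have eventually_small (c d : ℝ) : ∀ᶠ x in atTop, volume (bad (Set.Icc c d) x) < 1 / 2 :=
    (hsv.tendsto_volume_le_abs_sub hm measurableSet_Icc (by simp) (half_pos hε)).eventually_lt_const
      (by simp)
  obtain ⟨X, hX⟩ := eventually_atTop.1 (eventually_small 0 (b + 1 - a))
  filter_upwards [eventually_small b (b + 1), eventually_ge_atTop (X - a)] with x hx hXx u hu
  have hxu : volume ((· + -u) ⁻¹' bad (Set.Icc 0 (b + 1 - a)) (x + u)) < 1 / 2 := by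
    rw [measure_preimage_add_right]
    exact hX _ (by linarith [hu.1])
  have hbad : volume (bad (Set.Icc b (b + 1)) x ∪
      (· + -u) ⁻¹' bad (Set.Icc 0 (b + 1 - a)) (x + u)) < volume (Set.Icc b (b + 1)) :=
    calc
      _ ≤ _ := measure_union_le _ _
      _ < 1 / 2 + 1 / 2 := ENNReal.add_lt_add hx hxu
      _ = volume (Set.Icc b (b + 1)) := by simp [ENNReal.inv_two_add_inv_two]
  obtain ⟨v, hv, hv_good⟩ := Set.not_subset.1 fun hsub => (measure_mono hsub).not_gt hbad
  have hv_x : |h (x + v) - h x| < ε / 2 := by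
    by_contra! hle
    exact hv_good (Or.inl ⟨hle, hv⟩)
  have hv_xu : |h (x + v) - h (x + u)| < ε / 2 := by
    by_contra! hle
    refine hv_good (Or.inr ⟨?_, by linarith [hv.1, hu.2], by linarith [hv.2, hu.1]⟩)
    simpa [add_assoc] using hle
  calc
    |h (x + u) - h x| ≤ |h (x + u) - h (x + v)| + |h (x + v) - h x| := abs_sub_le _ _ _
    _ < ε := by rw [abs_sub_comm (h (x + u))]; linarith

theorem exists_locallyIntegrableOn_Ici (hsv : AdditivelySlowlyVarying h) (hm : Measurable h) :
    ∃ X, LocallyIntegrableOn h (Set.Ici X) := by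
  obtain ⟨X, hX⟩ := eventually_atTop.1 (hsv.eventually_forall_abs_sub_lt hm (-1) 1 one_pos)
  refine ⟨X, fun x hx => IntegrableAtFilter.filter_mono nhdsWithin_le_nhds ?_⟩
  refine (volume.finiteAt_nhds x).integrableAtFilter
    hm.stronglyMeasurable.stronglyMeasurableAtFilter ⟨|h x| + 1, eventually_map.2 ?_⟩
  filter_upwards [Icc_mem_nhds (sub_one_lt x) (lt_add_one x)] with y hy
  have hyx : |h y - h x| < 1 := by
    simpa using hX x hx (y - x) ⟨by linarith [hy.1], by linarith [hy.2]⟩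
  calc
    |h y| ≤ |h x| + |h y - h x| := by simpa using abs_add_le (h x) (h y - h x)
    _ ≤ |h x| + 1 := by gcongr

theorem exists_locallyIntegrable_eventuallyEq (hsv : AdditivelySlowlyVarying h)
    (hm : Measurable h) :
    ∃ g, Measurable g ∧ LocallyIntegrable g ∧ g =ᶠ[atTop] h := by
  obtain ⟨X, hX⟩ := hsv.exists_locallyIntegrableOn_Ici hm
  refine ⟨(Set.Ici X).indicator h, hm.indicator measurableSet_Ici,
    locallyIntegrable_iff.2 fun K hK => ?_, ?_⟩
  · rw [integrableOn_indicator_iff measurableSet_Ici]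
    exact hX.integrableOn_compact_subset Set.inter_subset_left (hK.inter_left isClosed_Ici)
  · filter_upwards [eventually_ge_atTop X] with x hx using Set.indicator_of_mem hx h

theorem tendsto_integral_sub (hsv : AdditivelySlowlyVarying h) (hm : Measurable h) (a b : ℝ) :
    Tendsto (fun x => ∫ u in a..b, (h (x + u) - h x)) atTop (𝓝 0) := by
  rw [← intervalIntegral.integral_zero (a := a) (b := b) (μ := volume)]
  refine intervalIntegral.tendsto_integral_filter_of_dominated_convergence (fun _ => 1)
    (Eventually.of_forall fun x => ?_) ?_ intervalIntegrable_const (ae_of_all _ fun u _ => hsv u)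
  · exact ((hm.comp (measurable_const_add x)).sub_const _).aestronglyMeasurable
  · filter_upwards [hsv.eventually_forall_abs_sub_lt hm (min a b) (max a b) one_pos] with x hx
    exact ae_of_all _ fun u hu => (hx u (Set.uIoc_subset_uIcc hu)).le

end AdditivelySlowlyVarying

section Translate

variable {E : Type*} [NormedAddCommGroup E] {g : ℝ → E}

theorem intervalIntegrable_of_locallyIntegrable (hg : LocallyIntegrable g) (a b : ℝ) :
    IntervalIntegrable g volume a b :=
  (hg.integrableOn_isCompact isCompact_uIcc).intervalIntegrable

theorem intervalIntegrable_comp_add_right_of_locallyIntegrable (hg : LocallyIntegrable g)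
    (d a b : ℝ) : IntervalIntegrable (fun s => g (s + d)) volume a b := by
  simpa using (intervalIntegrable_of_locallyIntegrable hg (a + d) (b + d)).comp_add_right d

theorem integral_comp_add_right_sub [NormedSpace ℝ E] (hg : LocallyIntegrable g) (d x : ℝ) :
    ∫ s in (0 : ℝ)..x, (g (s + d) - g s) =
      (∫ u in (0 : ℝ)..d, g (x + u)) - ∫ u in (0 : ℝ)..d, g u := by
  have hint := intervalIntegrable_of_locallyIntegrable hg
  rw [intervalIntegral.integral_sub
      (intervalIntegrable_comp_add_right_of_locallyIntegrable hg d 0 x) (hint 0 x),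
    intervalIntegral.integral_comp_add_right, intervalIntegral.integral_comp_add_left,
    intervalIntegral.integral_interval_sub_interval_comm' (hint _ _) (hint _ _) (hint _ _),
    add_zero, zero_add]

end Translate

namespace AdditivelySlowlyVarying

theorem tendsto_sub_integral {g : ℝ → ℝ} (hsv : AdditivelySlowlyVarying g) (hm : Measurable g)
    (hg : LocallyIntegrable g) :
    Tendsto (fun x => g x - ∫ s in (0 : ℝ)..x, (g (s + 1) - g s)) atTop
      (𝓝 (∫ u in (0 : ℝ)..1, g u)) := by
  have hlim := (hsv.tendsto_integral_sub hm 0 1).const_sub (∫ u in (0 : ℝ)..1, g u)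
  rw [sub_zero] at hlim
  refine hlim.congr fun x => ?_
  have hshift : IntervalIntegrable (fun u => g (x + u)) volume 0 1 := by
    simpa only [add_comm x] using intervalIntegrable_comp_add_right_of_locallyIntegrable hg x 0 1
  rw [integral_comp_add_right_sub hg,
    intervalIntegral.integral_sub hshift intervalIntegrable_const,
    intervalIntegral.integral_const, sub_zero, one_smul]
  ring

theorem exists_eq_add_integral {h : ℝ → ℝ} (hsv : AdditivelySlowlyVarying h)
    (hm : Measurable h) :
    ∃ (c : ℝ) (η ε : ℝ → ℝ), Measurable η ∧ Measurable ε ∧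
      Tendsto η atTop (𝓝 c) ∧ Tendsto ε atTop (𝓝 0) ∧
      ∀ x, h x = η x + ∫ s in (0 : ℝ)..x, ε s := by
  obtain ⟨g, hgm, hg, hgh⟩ := hsv.exists_locallyIntegrable_eventuallyEq hm
  have hgsv : AdditivelySlowlyVarying g := hsv.congr' hgh
  let ε (s : ℝ) : ℝ := g (s + 1) - g s
  have hε_meas : Measurable ε := (hgm.comp (measurable_add_const 1)).sub hgm
  have hε_int (a b : ℝ) : IntervalIntegrable ε volume a b :=
    (intervalIntegrable_comp_add_right_of_locallyIntegrable hg 1 a b).sub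
      (intervalIntegrable_of_locallyIntegrable hg a b)
  refine ⟨∫ u in (0 : ℝ)..1, g u, fun x => h x - ∫ s in (0 : ℝ)..x, ε s, ε, ?_, hε_meas, ?_,
    hgsv 1, fun x => (sub_add_cancel _ _).symm⟩
  · exact hm.sub (intervalIntegral.continuous_primitive hε_int 0).measurable
  · refine (hgsv.tendsto_sub_integral hgm hg).congr' ?_
    filter_upwards [hgh] with x hx
    rw [hx]

end AdditivelySlowlyVarying

theorem additivelySlowlyVarying_log_comp_exp {φ : ℝ → ℝ}
    (hsv : ∀ lam : ℝ, 0 < lam → Tendsto (fun t => φ (lam * t) / φ t) atTop (𝓝 1)) :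
    AdditivelySlowlyVarying fun x => Real.log (φ (Real.exp x)) := fun u => by
  have hlim := (hsv _ (Real.exp_pos u)).comp Real.tendsto_exp_atTop
  have hlog := hlim.log one_ne_zero
  rw [Real.log_one] at hlog
  refine hlog.congr' ?_
  filter_upwards [hlim.eventually_ne one_ne_zero] with x hx
  rw [Function.comp_apply, ← Real.exp_add, add_comm u] at hx ⊢
  rw [Real.log_div (div_ne_zero_iff.1 hx).1 (div_ne_zero_iff.1 hx).2]

theorem integral_comp_log_div (f : ℝ → ℝ) {a b : ℝ} (ha : 0 < a) (hb : 0 < b) :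
    ∫ u in a..b, f (Real.log u) / u = ∫ s in Real.log a..Real.log b, f s := by
  have hpos {u : ℝ} (hu : min a b ≤ u) : 0 < u := (lt_min ha hb).trans_le hu
  rw [← intervalIntegral.integral_deriv_smul_comp_of_deriv_nonneg (f' := fun u => u⁻¹)
    (Real.continuousOn_log.mono fun u hu => (hpos hu.1).ne')
    (fun u hu => Real.hasDerivAt_log (hpos hu.1.le).ne')
    (fun u hu => (inv_pos.2 (hpos hu.1.le)).le)]
  simp only [Function.comp_apply, smul_eq_mul, div_eq_inv_mul]

theorem slowly_varying_karamata_representation_general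
    (φ : ℝ → ℝ) (hm : Measurable φ) (hpos : ∀ t : ℝ, 1 ≤ t → 0 < φ t)
    (hsv : ∀ lam : ℝ, 0 < lam → Tendsto (fun t : ℝ => φ (lam * t) / φ t) atTop (𝓝 1)) :
    ∃ (c : ℝ) (η e : ℝ → ℝ), Measurable η ∧ Measurable e ∧
      Tendsto η atTop (𝓝 c) ∧ Tendsto e atTop (𝓝 0) ∧
      ∀ t : ℝ, 1 ≤ t → φ t = Real.exp (η t + ∫ u in (1:ℝ)..t, e u / u) := by
  obtain ⟨c, η, ε, hη_meas, hε_meas, hη_lim, hε_lim, hrep⟩ :=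
    (additivelySlowlyVarying_log_comp_exp hsv).exists_eq_add_integral
      (Real.measurable_log.comp (hm.comp Real.measurable_exp))
  refine ⟨c, η ∘ Real.log, ε ∘ Real.log, hη_meas.comp Real.measurable_log,
    hε_meas.comp Real.measurable_log, hη_lim.comp Real.tendsto_log_atTop,
    hε_lim.comp Real.tendsto_log_atTop, fun t ht => ?_⟩
  have ht0 : 0 < t := one_pos.trans_le ht
  calc
    φ t = Real.exp (Real.log (φ (Real.exp (Real.log t)))) := by
      rw [Real.exp_log ht0, Real.exp_log (hpos t ht)]
    _ = Real.exp (η (Real.log t) + ∫ u in (1 : ℝ)..t, ε (Real.log u) / u) := by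
      rw [hrep, integral_comp_log_div ε one_pos ht0, Real.log_one]

/-- Karamata representation theorem for a slowly varying function of class `𝓜`. -/
theorem slowly_varying_karamata_representation
    (φ : ℝ → ℝ) (hφ : SlowlyVaryingM φ) :
    ∃ (c : ℝ) (η e : ℝ → ℝ), Measurable η ∧ Measurable e ∧
      Tendsto η atTop (𝓝 c) ∧ Tendsto e atTop (𝓝 0) ∧
      ∀ t : ℝ, 1 ≤ t → φ t = Real.exp (η t + ∫ u in (1:ℝ)..t, e u / u) :=
  slowly_varying_karamata_representation_general φ hφ.1 hφ.2.1 hφ.2.2.2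
end

section
/- (Hörmander-type embedding into C^ρ, Euclidean version of Proposition 2, sufficiency) Let φ be a function of the class 𝓜 satisfying ∫₁^{+∞} dt/(t φ(t)²) < ∞, let n ≥ 1 and let ρ ≥ 0 be an integer. If g : ℝⁿ → ℂ is Lebesgue measurable and ∫_{ℝⁿ} ⟨ξ⟩^{2ρ+n} φ(⟨ξ⟩)² |g(ξ)|² dξ < ∞, then the function u(x) := ∫_{ℝⁿ} e^{2πi x·ξ} g(ξ) dξ is well defined and ρ-times continuously differentiable on ℝⁿ (of class C^ρ). -/
open MeasureTheory Filter Topology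

/-- The "Japanese bracket" `⟨ξ⟩ := (1 + |ξ|²)^{1/2}` of a point `ξ ∈ ℝⁿ`. -/
noncomputable def jbracket {n : ℕ} (ξ : EuclideanSpace ℝ (Fin n)) : ℝ :=
  Real.sqrt (1 + ‖ξ‖ ^ 2)

/-!
The substitution `t = √(1 + r²)` turns `∫ dt / (t φ(t)²) < ∞` into integrability of the radial
weight `(⟨ξ⟩ⁿ φ(⟨ξ⟩)²)⁻¹`. Since `w|f|² + w⁻¹ ≥ 2|f|`, applied with `w = ⟨ξ⟩ⁿ φ(⟨ξ⟩)²` and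
`f = ⟨ξ⟩^ρ g`, this makes `⟨ξ⟩^ρ g` integrable, and one may differentiate under the integral sign
`ρ` times.
-/

open Set Module
open scoped FourierTransform RealInnerProductSpace

section RadialSubstitution

theorem one_le_sqrt_one_add_sq (r : ℝ) : 1 ≤ √(1 + r ^ 2) :=
  Real.one_le_sqrt.2 (le_add_of_nonneg_right (sq_nonneg r))

theorem le_sqrt_one_add_sq (r : ℝ) : r ≤ √(1 + r ^ 2) :=
  Real.le_sqrt_of_sq_le (le_add_of_nonneg_left zero_le_one)

theorem one_lt_sqrt_one_add_sq {r : ℝ} (hr : 0 < r) : 1 < √(1 + r ^ 2) :=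
  Real.lt_sqrt_of_sq_lt (by rw [one_pow]; exact lt_add_of_pos_right 1 (by positivity))

theorem hasDerivAt_sqrt_one_add_sq (r : ℝ) :
    HasDerivAt (fun r : ℝ ↦ √(1 + r ^ 2)) (r / √(1 + r ^ 2)) r := by
  refine (((hasDerivAt_pow 2 r).const_add 1).sqrt (by positivity)).congr_deriv ?_
  rw [Nat.cast_ofNat, pow_one, mul_div_mul_left _ _ two_ne_zero]

theorem strictMonoOn_sqrt_one_add_sq : StrictMonoOn (fun r : ℝ ↦ √(1 + r ^ 2)) (Ici 0) :=
  fun _ ha _ _ hab ↦ Real.sqrt_lt_sqrt (by positivity) (by gcongr)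

variable {F : Type*} [NormedAddCommGroup F] [NormedSpace ℝ F] {h : ℝ → F}

theorem integrableOn_Ioi_comp_sqrt_one_add_sq {a : ℝ} (ha : 0 < a)
    (hint : IntegrableOn h (Ioi 1)) : IntegrableOn (fun r ↦ h √(1 + r ^ 2)) (Ioi a) := by
  have image_subset : (fun r : ℝ ↦ √(1 + r ^ 2)) '' Ioi a ⊆ Ioi 1 := by
    rintro _ ⟨r, hr, rfl⟩
    exact one_lt_sqrt_one_add_sq (ha.trans hr)
  have hsubst : IntegrableOn (fun r ↦ |r / √(1 + r ^ 2)| • h √(1 + r ^ 2)) (Ioi a) :=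
    (integrableOn_image_iff_integrableOn_abs_deriv_smul measurableSet_Ioi
      (fun r _ ↦ (hasDerivAt_sqrt_one_add_sq r).hasDerivWithinAt)
      (strictMonoOn_sqrt_one_add_sq.injOn.mono (Ioi_subset_Ici ha.le)) h).1
      (hint.mono_set image_subset)
  have inv_deriv_le : ∀ r ∈ Ioi a, ‖√(1 + r ^ 2) / r‖ ≤ a⁻¹ + 1 := fun r hr ↦ by
    have hr₀ : 0 < r := ha.trans hr
    calc ‖√(1 + r ^ 2) / r‖ = √(1 + r ^ 2) / r := Real.norm_of_nonneg (by positivity)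
      _ ≤ (1 + r) / r := by
          gcongr
          simpa [abs_of_pos hr₀] using sqrt_one_add_norm_sq_le r
      _ = r⁻¹ + 1 := by field_simp
      _ ≤ a⁻¹ + 1 := by gcongr; exact hr.le
  refine (hsubst.bdd_smul (φ := fun r ↦ √(1 + r ^ 2) / r) (a⁻¹ + 1)
    (by fun_prop : Measurable _).aestronglyMeasurable
    (ae_restrict_of_forall_mem measurableSet_Ioi inv_deriv_le)).congr ?_
  filter_upwards [ae_restrict_mem measurableSet_Ioi] with r hr
  have hr₀ : 0 < r := ha.trans hr
  simp only [Pi.smul_apply']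
  rw [abs_of_pos (by positivity), ← inv_div, inv_smul_smul₀ (by positivity)]

theorem integrableOn_Ioi_zero_comp_sqrt_one_add_sq (hm : StronglyMeasurable h)
    (hbdd : (𝓝[>] 1).IsBoundedUnder (· ≤ ·) (‖h ·‖)) (hint : IntegrableOn h (Ioi 1)) :
    IntegrableOn (fun r ↦ h √(1 + r ^ 2)) (Ioi 0) := by
  have htendsto : Tendsto (fun r : ℝ ↦ √(1 + r ^ 2)) (𝓝[>] 0) (𝓝[>] 1) := by
    refine tendsto_nhdsWithin_iff.2 ⟨?_, ?_⟩
    · exact (Continuous.tendsto' (by fun_prop) 0 1 (by simp)).mono_left nhdsWithin_le_nhds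
    · filter_upwards [self_mem_nhdsWithin] with r (hr : 0 < r)
      exact one_lt_sqrt_one_add_sq hr
  -- The substitution degenerates at `r = 0`, where `√(1 + r²)` has derivative `0`.
  have hnear : IntegrableAtFilter (fun r ↦ h √(1 + r ^ 2)) (𝓝[>] 0) :=
    ((volume.finiteAt_nhds 0).filter_mono nhdsWithin_le_nhds).integrableAtFilter
      (hm.comp_measurable (by fun_prop)).stronglyMeasurableAtFilter
      (htendsto.isBoundedUnder_comp hbdd)
  obtain ⟨s, hs, hints⟩ := hnear
  obtain ⟨a, ha, hsub⟩ := mem_nhdsGT_iff_exists_Ioc_subset.1 hs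
  rw [← Ioc_union_Ioi_eq_Ioi (le_of_lt ha)]
  exact (hints.mono_set hsub).union (integrableOn_Ioi_comp_sqrt_one_add_sq ha hint)

variable {V : Type*} [NormedAddCommGroup V] [NormedSpace ℝ V] [FiniteDimensional ℝ V]
  [MeasurableSpace V] [BorelSpace V] (μ : Measure V) [μ.IsAddHaarMeasure]

theorem integrable_div_pow_finrank_smul_comp_sqrt_one_add_norm_sq (hm : StronglyMeasurable h)
    (hbdd : (𝓝[>] 1).IsBoundedUnder (· ≤ ·) (‖h ·‖)) (hint : IntegrableOn h (Ioi 1)) :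
    Integrable (fun ξ : V ↦
      (√(1 + ‖ξ‖ ^ 2) / √(1 + ‖ξ‖ ^ 2) ^ finrank ℝ V) • h √(1 + ‖ξ‖ ^ 2)) μ := by
  rcases subsingleton_or_nontrivial V with _ | _
  · exact .of_finite
  refine (integrable_fun_norm_addHaar μ
    (f := fun r ↦ (√(1 + r ^ 2) / √(1 + r ^ 2) ^ finrank ℝ V) • h √(1 + r ^ 2))).2 ?_
  simp_rw [smul_smul]
  refine (integrableOn_Ioi_zero_comp_sqrt_one_add_sq hm hbdd hint).bdd_smul 1
    (by fun_prop) (ae_restrict_of_forall_mem measurableSet_Ioi fun r (hr : 0 < r) ↦ ?_)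
  have hdim : √(1 + r ^ 2) ^ finrank ℝ V = √(1 + r ^ 2) ^ (finrank ℝ V - 1) * √(1 + r ^ 2) :=
    (pow_sub_one_mul finrank_pos.ne' _).symm
  rw [Real.norm_of_nonneg (by positivity), hdim, div_mul_cancel_right₀ (by positivity),
    ← div_eq_mul_inv]
  exact div_le_one_of_le₀ (by gcongr; exact le_sqrt_one_add_sq r) (by positivity)

theorem integrable_inv_pow_finrank_mul_comp_sqrt_one_add_norm_sq {φ : ℝ → ℝ} (hφ : Measurable φ)
    (hφ_near : ∃ c > 0, ∀ᶠ t in 𝓝[>] 1, c ≤ φ t)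
    (hint : IntegrableOn (fun t ↦ 1 / (t * φ t ^ 2)) (Ioi 1)) :
    Integrable (fun ξ : V ↦ (√(1 + ‖ξ‖ ^ 2) ^ finrank ℝ V * φ √(1 + ‖ξ‖ ^ 2) ^ 2)⁻¹) μ := by
  obtain ⟨c, hc, hcφ⟩ := hφ_near
  have hbdd : (𝓝[>] 1).IsBoundedUnder (· ≤ ·) fun t ↦ ‖1 / (t * φ t ^ 2)‖ := by
    refine isBoundedUnder_of_eventually_le (a := 1 / (1 * c ^ 2)) ?_
    filter_upwards [hcφ, self_mem_nhdsWithin] with t hct (ht : 1 < t)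
    rw [Real.norm_of_nonneg (by positivity)]
    gcongr
  refine (integrable_div_pow_finrank_smul_comp_sqrt_one_add_norm_sq μ
    (by fun_prop : Measurable _).stronglyMeasurable hbdd hint).congr (.of_forall fun ξ ↦ ?_)
  simp only [smul_eq_mul]
  field_simp

end RadialSubstitution

theorem integrable_of_integrable_mul_norm_sq {α E : Type*} {_ : MeasurableSpace α}
    [NormedAddCommGroup E] {μ : Measure α} {w : α → ℝ} {f : α → E}
    (hf : AEStronglyMeasurable f μ) (hw : ∀ᵐ x ∂μ, 0 < w x)
    (hw_inv : Integrable (fun x ↦ (w x)⁻¹) μ) (hwf : Integrable (fun x ↦ w x * ‖f x‖ ^ 2) μ) :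
    Integrable f μ := by
  refine (hwf.add hw_inv).mono' hf ?_
  filter_upwards [hw] with x hx
  have amgm : 2 * ‖f x‖ ≤ w x * ‖f x‖ ^ 2 + (w x)⁻¹ := by
    have hsq : w x * ‖f x‖ ^ 2 + (w x)⁻¹ - 2 * ‖f x‖ = (w x * ‖f x‖ - 1) ^ 2 / w x := by
      field_simp
      ring
    exact sub_nonneg.1 (hsq ▸ by positivity)
  exact (by linarith [norm_nonneg (f x)] : ‖f x‖ ≤ 2 * ‖f x‖).trans amgm

theorem integrable_pow_norm_mul_norm_of_le {V E : Type*} [NormedAddCommGroup V]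
    [MeasurableSpace V] [OpensMeasurableSpace V] [NormedAddCommGroup E] [NormedSpace ℝ E]
    {μ : Measure V} {g : V → E} {ρ k : ℕ} (hk : k ≤ ρ) (hgm : AEStronglyMeasurable g μ)
    (hg : Integrable (fun ξ ↦ √(1 + ‖ξ‖ ^ 2) ^ ρ • g ξ) μ) :
    Integrable (fun ξ ↦ ‖ξ‖ ^ k * ‖g ξ‖) μ := by
  refine hg.mono (by fun_prop) (.of_forall fun ξ ↦ ?_)
  rw [norm_smul, Real.norm_of_nonneg (by positivity), Real.norm_of_nonneg (by positivity)]
  gcongr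
  calc ‖ξ‖ ^ k ≤ √(1 + ‖ξ‖ ^ 2) ^ k := by gcongr; exact le_sqrt_one_add_sq _
    _ ≤ √(1 + ‖ξ‖ ^ 2) ^ ρ := pow_le_pow_right₀ (one_le_sqrt_one_add_sq _) hk

theorem exp_two_pi_I_inner_eq_fourierChar {V : Type*} [NormedAddCommGroup V]
    [InnerProductSpace ℝ V] (x ξ : V) :
    Complex.exp (2 * Real.pi * Complex.I * (⟪x, ξ⟫ : ℂ)) = Real.fourierChar ⟪ξ, x⟫ := by
  rw [Real.fourierChar_apply, real_inner_comm]
  push_cast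
  ring_nf

section Fourier

variable {V E : Type*} [NormedAddCommGroup V] [InnerProductSpace ℝ V] [FiniteDimensional ℝ V]
  [MeasurableSpace V] [BorelSpace V] [NormedAddCommGroup E] [NormedSpace ℂ E] {g : V → E}

theorem integrable_exp_inner_smul (hg : Integrable g) (x : V) :
    Integrable fun ξ ↦ Complex.exp (2 * Real.pi * Complex.I * (⟪x, ξ⟫ : ℂ)) • g ξ := by
  simpa [exp_two_pi_I_inner_eq_fourierChar, Circle.smul_def] using
    (Real.fourierIntegral_convergent_iff (-x)).2 hg

theorem contDiff_integral_exp_inner_smul {N : ℕ∞}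
    (hg : ∀ k : ℕ, k ≤ N → Integrable fun ξ ↦ ‖ξ‖ ^ k * ‖g ξ‖) :
    ContDiff ℝ N fun x ↦ ∫ ξ, Complex.exp (2 * Real.pi * Complex.I * (⟪x, ξ⟫ : ℂ)) • g ξ := by
  have hfourier : (fun x ↦ ∫ ξ, Complex.exp (2 * Real.pi * Complex.I * (⟪x, ξ⟫ : ℂ)) • g ξ) =
      𝓕 g ∘ Neg.neg := by
    ext x
    simp only [exp_two_pi_I_inner_eq_fourierChar, Function.comp_apply,
      ← Real.fourierInv_eq_fourier_neg, Real.fourierInv_eq, Circle.smul_def]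
  exact hfourier ▸ (Real.contDiff_fourier hg).comp contDiff_neg

end Fourier

theorem SlowlyVaryingM.exists_pos_eventually_le {φ : ℝ → ℝ} (hφ : SlowlyVaryingM φ) :
    ∃ c > 0, ∀ᶠ t in 𝓝[>] 1, c ≤ φ t := by
  obtain ⟨-, hpos, hbdd, -⟩ := hφ
  obtain ⟨C, hC, hCφ⟩ := hbdd 2 one_lt_two
  refine ⟨C⁻¹, inv_pos.2 hC, ?_⟩
  filter_upwards [Ioo_mem_nhdsGT one_lt_two] with t ht
  exact inv_le_of_inv_le₀ (hpos t ht.1.le)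
    (one_div (φ t) ▸ (hCφ t (Ioo_subset_Icc_self ht)).2)

theorem integrable_pow_smul_of_refined_weighted_square_integrable {V E : Type*}
    [NormedAddCommGroup V] [NormedSpace ℝ V] [FiniteDimensional ℝ V] [MeasurableSpace V]
    [BorelSpace V] {μ : Measure V} [μ.IsAddHaarMeasure] [NormedAddCommGroup E] [NormedSpace ℝ E]
    {φ : ℝ → ℝ} (hφ : Measurable φ) (hφ_pos : ∀ t, 1 ≤ t → 0 < φ t)
    (hφ_near : ∃ c > 0, ∀ᶠ t in 𝓝[>] 1, c ≤ φ t)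
    (hH : (∫⁻ t in Ioi (1 : ℝ), ENNReal.ofReal (1 / (t * φ t ^ 2))) < ⊤)
    {ρ : ℕ} {g : V → E} (hg : AEStronglyMeasurable g μ)
    (hfin : (∫⁻ ξ, ENNReal.ofReal (√(1 + ‖ξ‖ ^ 2) ^ (2 * (ρ : ℝ) + finrank ℝ V) *
      φ √(1 + ‖ξ‖ ^ 2) ^ 2 * ‖g ξ‖ ^ 2) ∂μ) < ⊤) :
    Integrable (fun ξ ↦ √(1 + ‖ξ‖ ^ 2) ^ ρ • g ξ) μ := by
  have hH_int : IntegrableOn (fun t ↦ 1 / (t * φ t ^ 2)) (Ioi 1) := by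
    refine (lintegral_ofReal_ne_top_iff_integrable
      (by fun_prop : Measurable _).aestronglyMeasurable ?_).1 hH.ne
    filter_upwards [ae_restrict_mem measurableSet_Ioi] with t (ht : 1 < t)
    exact one_div_nonneg.2 (by positivity)
  have hfin_int := (lintegral_ofReal_ne_top_iff_integrable (by fun_prop)
    (.of_forall fun ξ ↦ by simp only [Pi.zero_apply]; positivity)).1 hfin.ne
  have hφ_bracket_pos (ξ : V) : 0 < φ √(1 + ‖ξ‖ ^ 2) := hφ_pos _ (one_le_sqrt_one_add_sq _)
  refine integrable_of_integrable_mul_norm_sq (by fun_prop)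
    (.of_forall fun ξ ↦ mul_pos (by positivity) (pow_pos (hφ_bracket_pos ξ) 2))
    (integrable_inv_pow_finrank_mul_comp_sqrt_one_add_norm_sq μ hφ hφ_near hH_int)
    (hfin_int.congr (.of_forall fun ξ ↦ ?_))
  have split_exponent : √(1 + ‖ξ‖ ^ 2) ^ (2 * (ρ : ℝ) + finrank ℝ V) =
      (√(1 + ‖ξ‖ ^ 2) ^ ρ) ^ 2 * √(1 + ‖ξ‖ ^ 2) ^ finrank ℝ V := by
    rw [← pow_mul', ← pow_add, ← Real.rpow_natCast]
    norm_cast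
  simp only [norm_smul, split_exponent, Real.norm_of_nonneg (pow_nonneg (Real.sqrt_nonneg _) ρ)]
  ring

theorem inverse_fourier_contDiff_of_refined_weighted_square_integrable_general {V E : Type*}
    [NormedAddCommGroup V] [InnerProductSpace ℝ V] [FiniteDimensional ℝ V] [MeasurableSpace V]
    [BorelSpace V] [NormedAddCommGroup E] [NormedSpace ℂ E]
    {φ : ℝ → ℝ} (hφ : Measurable φ) (hφ_pos : ∀ t, 1 ≤ t → 0 < φ t)
    (hφ_near : ∃ c > 0, ∀ᶠ t in 𝓝[>] 1, c ≤ φ t)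
    (hH : (∫⁻ t in Ioi (1 : ℝ), ENNReal.ofReal (1 / (t * φ t ^ 2))) < ⊤)
    {ρ : ℕ} {g : V → E} (hg : AEStronglyMeasurable g)
    (hfin : (∫⁻ ξ, ENNReal.ofReal (√(1 + ‖ξ‖ ^ 2) ^ (2 * (ρ : ℝ) + finrank ℝ V) *
      φ √(1 + ‖ξ‖ ^ 2) ^ 2 * ‖g ξ‖ ^ 2)) < ⊤) :
    (∀ x : V, Integrable fun ξ ↦
        Complex.exp (2 * Real.pi * Complex.I * (⟪x, ξ⟫ : ℂ)) • g ξ) ∧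
      ContDiff ℝ (ρ : ℕ∞) fun x : V ↦
        ∫ ξ, Complex.exp (2 * Real.pi * Complex.I * (⟪x, ξ⟫ : ℂ)) • g ξ := by
  have hweighted : Integrable fun ξ ↦ √(1 + ‖ξ‖ ^ 2) ^ ρ • g ξ :=
    integrable_pow_smul_of_refined_weighted_square_integrable hφ hφ_pos hφ_near hH hg hfin
  have hmoment {k : ℕ} (hk : k ≤ ρ) : Integrable fun ξ ↦ ‖ξ‖ ^ k * ‖g ξ‖ :=
    integrable_pow_norm_mul_norm_of_le hk hg hweighted
  have hint : Integrable g := (integrable_norm_iff hg).1 (by simpa using hmoment ρ.zero_le)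
  exact ⟨integrable_exp_inner_smul hint,
    contDiff_integral_exp_inner_smul fun _ hk ↦ hmoment (mod_cast hk)⟩

/-- Hörmander-type embedding into `C^ρ` (Euclidean version, sufficiency): under the
Hörmander condition on `φ`, if `∫ ⟨ξ⟩^{2ρ+n} φ(⟨ξ⟩)² |g(ξ)|² dξ < ∞` then the inverse
Fourier transform `u(x) = ∫ e^{2πi x·ξ} g(ξ) dξ` is well defined and of class `C^ρ`. -/
theorem inverse_fourier_contDiff_of_refined_weighted_square_integrable
    (φ : ℝ → ℝ) (hφ : SlowlyVaryingM φ)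
    (hH : (∫⁻ t in Set.Ioi (1:ℝ), ENNReal.ofReal (1 / (t * φ t ^ 2))) < ⊤)
    (n : ℕ) (hn : 1 ≤ n) (ρ : ℕ)
    (g : EuclideanSpace ℝ (Fin n) → ℂ) (hg : Measurable g)
    (hfin : (∫⁻ ξ, ENNReal.ofReal
        (jbracket ξ ^ (2 * (ρ:ℝ) + n) * φ (jbracket ξ) ^ 2 * ‖g ξ‖ ^ 2)) < ⊤) :
    (∀ x : EuclideanSpace ℝ (Fin n),
        Integrable (fun ξ : EuclideanSpace ℝ (Fin n) =>
          Complex.exp (2 * Real.pi * Complex.I * ((inner ℝ x ξ : ℝ) : ℂ)) * g ξ)) ∧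
      ContDiff ℝ (ρ : ℕ∞) (fun x : EuclideanSpace ℝ (Fin n) =>
        ∫ ξ : EuclideanSpace ℝ (Fin n),
          Complex.exp (2 * Real.pi * Complex.I * ((inner ℝ x ξ : ℝ) : ℂ)) * g ξ) :=
  inverse_fourier_contDiff_of_refined_weighted_square_integrable_general hφ.1 hφ.2.1
    hφ.exists_pos_eventually_le hH hg.aestronglyMeasurable
    (by simpa only [jbracket, finrank_euclideanSpace_fin] using hfin)
end

section
/- (Peetre-type two-weight inequality) Let φ be a function of the class 𝓜, let s ∈ ℝ, ε > 0 and n ≥ 1. Then there exists a constant C > 0 such that for all ξ, η ∈ ℝⁿ one has ⟨ξ⟩^{s} φ(⟨ξ⟩) ≤ C ⟨ξ − η⟩^{|s|+ε} ⟨η⟩^{s} φ(⟨η⟩). -/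
open MeasureTheory Filter Topology

/-! Writing `h = log ∘ φ ∘ exp`, slow variation says that `h (x + u) - h x → 0` for every fixed `u`.
By measurability the convergence also holds in measure, and this makes it uniform for `u` in bounded
sets: most points `a` of an interval are good both for the step from `x` to `x + a` and for the step
from `x + u` to `x + a`. Chaining unit steps gives `|h x - h y| ≤ K + ε |x - y|`, which is Potter's
bound `φ x ≤ C max(x/y, y/x)^ε φ y`. For `x = ⟨ξ⟩` and `y = ⟨η⟩` Peetre's inequality bounds
`max(x/y, y/x)` by `√2 ⟨ξ - η⟩`. -/

open Set

lemma dist_le_mul_ceil_of_unit_steps {α : Type*} [PseudoMetricSpace α] {f : ℝ → α} {X δ : ℝ}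
    (hf : ∀ x ≥ X, ∀ u ∈ Icc (0 : ℝ) 1, dist (f x) (f (x + u)) ≤ δ)
    {x y : ℝ} (hx : X ≤ x) (hxy : x ≤ y) : dist (f x) (f y) ≤ ⌈y - x⌉₊ * δ := by
  set m := ⌈y - x⌉₊
  obtain ⟨u, ⟨hu₀, hu₁⟩, huy⟩ : ∃ u ∈ Icc (0 : ℝ) 1, x + m * u = y := by
    have hle : y - x ≤ m := Nat.le_ceil _
    rcases hxy.eq_or_lt with rfl | hlt
    · exact ⟨0, by simp, by simp⟩
    · have hm : (0 : ℝ) < m := (sub_pos.2 hlt).trans_le hle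
      exact ⟨(y - x) / m, ⟨div_nonneg (sub_nonneg.2 hxy) hm.le, (div_le_one hm).2 hle⟩,
        by field_simp; ring⟩
  have hsteps := dist_le_range_sum_of_dist_le (f := fun k : ℕ => f (x + k * u)) (d := fun _ => δ) m
    fun {k} _ => by
      have := hf (x + k * u) (hx.trans (le_add_of_nonneg_right (by positivity))) u ⟨hu₀, hu₁⟩
      rwa [add_assoc, ← add_one_mul, ← Nat.cast_add_one] at this
  simpa [huy] using hsteps

/-- Karamata's slow variation in additive form: `f` has vanishing increments at `+∞` if
`f (x + u) - f x → 0` as `x → +∞` for each fixed `u`. A positive `φ` is slowly varying exactly when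
`log ∘ φ ∘ exp` has vanishing increments. -/
def VanishingIncrements {F : Type*} [SeminormedAddCommGroup F] (f : ℝ → F) : Prop :=
  ∀ u : ℝ, Tendsto (fun x => f (x + u) - f x) atTop (𝓝 0)

namespace VanishingIncrements

variable {F : Type*} [SeminormedAddCommGroup F] {f : ℝ → F}

lemma tendstoInMeasure (hf : VanishingIncrements f) (hm : StronglyMeasurable f)
    (μ : Measure ℝ) [IsFiniteMeasure μ] :
    TendstoInMeasure μ (fun x u => f (x + u) - f x) atTop 0 := by
  intro δ hδ
  refine tendsto_of_seq_tendsto fun x hx => ?_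
  have hmeas (n : ℕ) : AEStronglyMeasurable (fun u => f (x n + u) - f (x n)) μ :=
    ((hm.comp_measurable (measurable_const_add (x n))).sub
      stronglyMeasurable_const).aestronglyMeasurable
  exact tendstoInMeasure_of_tendsto_ae hmeas (ae_of_all μ fun u => (hf u).comp hx) δ hδ

lemma tendsto_volume_large_increments (hf : VanishingIncrements f) (hm : StronglyMeasurable f)
    {δ : ℝ} (hδ : 0 < δ) {S : Set ℝ} (hS : MeasurableSet S) (hS' : volume S ≠ ⊤) :
    Tendsto (fun x => volume ({u | δ ≤ ‖f (x + u) - f x‖} ∩ S)) atTop (𝓝 0) := by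
  have : IsFiniteMeasure (volume.restrict S) := isFiniteMeasure_restrict.2 hS'
  have h := tendstoInMeasure_iff_norm.1 (hf.tendstoInMeasure hm (volume.restrict S)) δ hδ
  simpa only [Pi.zero_apply, sub_zero, Measure.restrict_apply' hS] using h

theorem tendstoUniformlyOn (hf : VanishingIncrements f) (hm : StronglyMeasurable f)
    {S : Set ℝ} (hS : Bornology.IsBounded S) :
    TendstoUniformlyOn (fun x u => f (x + u) - f x) 0 atTop S := by
  obtain ⟨T, hT, hST⟩ := hS.subset_closedBall_lt 0 0
  rw [Real.closedBall_eq_Icc, zero_sub, zero_add] at hST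
  refine Metric.tendstoUniformlyOn_iff.2 fun ε hε => ?_
  let bad (x : ℝ) : Set ℝ := {a | ε / 2 ≤ ‖f (x + a) - f x‖} ∩ Icc (-T) (2 * T)
  have hbad : Tendsto (fun x => volume (bad x)) atTop (𝓝 0) :=
    hf.tendsto_volume_large_increments hm (half_pos hε) measurableSet_Icc measure_Icc_lt_top.ne
  obtain ⟨X, hX⟩ := eventually_atTop.1 <|
    hbad.eventually_lt_const (ENNReal.ofReal_pos.2 (half_pos hT))
  filter_upwards [eventually_ge_atTop (X + T)] with x hx u hu
  obtain ⟨huT, hTu⟩ := hST hu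
  obtain ⟨a, ⟨ha₀, haT⟩, ha⟩ : ∃ a ∈ Icc 0 T, a ∉ bad x ∪ (· + -u) ⁻¹' bad (x + u) := by
    refine not_subset.1 fun hcover => lt_irrefl (volume (Icc 0 T)) ?_
    calc volume (Icc 0 T)
        ≤ volume (bad x) + volume ((· + -u) ⁻¹' bad (x + u)) :=
          (measure_mono hcover).trans (measure_union_le _ _)
      _ = volume (bad x) + volume (bad (x + u)) := by rw [measure_preimage_add_right]
      _ < ENNReal.ofReal (T / 2) + ENNReal.ofReal (T / 2) :=
          ENNReal.add_lt_add (hX x (by linarith)) (hX (x + u) (by linarith))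
      _ = volume (Icc 0 T) := by
          rw [← ENNReal.ofReal_add (by positivity) (by positivity), add_halves, Real.volume_Icc,
            sub_zero]
  have hx_step : ‖f (x + a) - f x‖ < ε / 2 :=
    not_le.1 fun h => ha (.inl ⟨h, by linarith, by linarith⟩)
  have hxu_step : ‖f (x + a) - f (x + u)‖ < ε / 2 := by
    refine not_le.1 fun h => ha (.inr ⟨?_, by linarith, by linarith⟩)
    rwa [mem_ofPred_eq, show x + u + (a + -u) = x + a by ring]
  rw [Pi.zero_apply, dist_zero_left, ← sub_sub_sub_cancel_left _ _ (f (x + a))]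
  exact (norm_sub_le _ _).trans_lt (by linarith)

lemma eventually_norm_sub_le_mul_abs_sub_add_one (hf : VanishingIncrements f)
    (hm : StronglyMeasurable f) {ε : ℝ} (hε : 0 < ε) :
    ∀ᶠ X in atTop, ∀ x ≥ X, ∀ y ≥ X, ‖f x - f y‖ ≤ ε * (|x - y| + 1) := by
  have hunit := Metric.tendstoUniformlyOn_iff.1
    (hf.tendstoUniformlyOn hm (Metric.isBounded_Icc 0 1)) ε hε
  filter_upwards [eventually_forall_ge_atTop.2 hunit] with X hX
  have hstep : ∀ x ≥ X, ∀ u ∈ Icc (0 : ℝ) 1, dist (f x) (f (x + u)) ≤ ε := fun x hx u hu => by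
    simpa only [Pi.zero_apply, dist_zero_left, ← dist_eq_norm'] using (hX x hx u hu).le
  intro x hx y hy
  wlog hxy : x ≤ y generalizing x y
  · rw [norm_sub_rev, abs_sub_comm]
    exact this y hy x hx (le_of_not_ge hxy)
  calc ‖f x - f y‖ = dist (f x) (f y) := (dist_eq_norm _ _).symm
    _ ≤ ⌈y - x⌉₊ * ε := dist_le_mul_ceil_of_unit_steps hstep hx hxy
    _ ≤ (y - x + 1) * ε := by
        gcongr
        exact (Nat.ceil_lt_add_one (sub_nonneg.2 hxy)).le
    _ = ε * (|x - y| + 1) := by rw [abs_sub_comm, abs_of_nonneg (sub_nonneg.2 hxy), mul_comm]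

theorem exists_norm_sub_le_add_mul_abs_sub (hf : VanishingIncrements f)
    (hm : StronglyMeasurable f) {a : ℝ} (hb : ∀ b, Bornology.IsBounded (f '' Icc a b))
    {ε : ℝ} (hε : 0 < ε) :
    ∃ K, ∀ x ≥ a, ∀ y ≥ a, ‖f x - f y‖ ≤ K + ε * |x - y| := by
  obtain ⟨X, hX⟩ := (hf.eventually_norm_sub_le_mul_abs_sub_add_one hm hε).exists
  obtain ⟨M, hM₀, hM⟩ := (Metric.isBounded_iff_exists_ge 0).1 (hb X)
  have hmax (x : ℝ) (hx : a ≤ x) : dist (f x) (f (max x X)) ≤ M := by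
    rcases le_total x X with hxX | hXx
    · rw [max_eq_right hxX]
      exact hM (mem_image_of_mem f ⟨hx, hxX⟩) (mem_image_of_mem f ⟨hx.trans hxX, le_rfl⟩)
    · rwa [max_eq_left hXx, dist_self]
  refine ⟨2 * M + ε, fun x hx y hy => ?_⟩
  calc ‖f x - f y‖
      = dist (f x) (f y) := (dist_eq_norm _ _).symm
    _ ≤ dist (f x) (f (max x X)) + dist (f (max x X)) (f (max y X)) + dist (f (max y X)) (f y) :=
        dist_triangle4 _ _ _ _
    _ ≤ M + ε * (|max x X - max y X| + 1) + M := by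
        gcongr
        · exact hmax x hx
        · rw [dist_eq_norm]
          exact hX _ (le_max_right _ _) _ (le_max_right _ _)
        · rw [dist_comm]
          exact hmax y hy
    _ ≤ M + ε * (|x - y| + 1) + M := by
        gcongr _ + _ * (?_ + _) + _
        exact abs_max_sub_max_le_abs x y X
    _ = 2 * M + ε + ε * |x - y| := by ring

end VanishingIncrements

lemma exp_abs_log_sub_log {x y : ℝ} (hx : 0 < x) (hy : 0 < y) :
    Real.exp |Real.log x - Real.log y| = max (x / y) (y / x) := by
  rw [abs_eq_max_neg, neg_sub, Real.exp_monotone.map_max, Real.exp_sub, Real.exp_sub,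
    Real.exp_log hx, Real.exp_log hy]

lemma rpow_le_max_div_rpow_abs_mul_rpow {x y : ℝ} (hx : 0 < x) (hy : 0 < y) (s : ℝ) :
    x ^ s ≤ max (x / y) (y / x) ^ |s| * y ^ s := by
  rw [← exp_abs_log_sub_log hx hy, ← Real.exp_mul, Real.rpow_def_of_pos hx, Real.rpow_def_of_pos hy,
    ← Real.exp_add, Real.exp_le_exp, ← sub_le_iff_le_add, ← sub_mul, ← abs_mul]
  exact le_abs_self _

namespace SlowlyVaryingM

variable {φ : ℝ → ℝ}

lemma stronglyMeasurable_log_comp_exp (hφ : SlowlyVaryingM φ) :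
    StronglyMeasurable fun x => Real.log (φ (Real.exp x)) :=
  (Real.measurable_log.comp (hφ.1.comp Real.measurable_exp)).stronglyMeasurable

lemma vanishingIncrements_log_comp_exp (hφ : SlowlyVaryingM φ) :
    VanishingIncrements fun x => Real.log (φ (Real.exp x)) := by
  obtain ⟨-, hpos, -, hslow⟩ := hφ
  intro u
  have hlog : Tendsto (fun x => Real.log (φ (Real.exp u * Real.exp x) / φ (Real.exp x))) atTop
      (𝓝 0) := by
    simpa only [Real.log_one, Function.comp_def] using
      ((hslow (Real.exp u) (Real.exp_pos u)).comp Real.tendsto_exp_atTop).log one_ne_zero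
  refine hlog.congr' ?_
  filter_upwards [eventually_ge_atTop 0, eventually_ge_atTop (-u)] with x hx hxu
  have hφx : 0 < φ (Real.exp x) := hpos _ (Real.one_le_exp hx)
  have hφxu : 0 < φ (Real.exp (x + u)) := hpos _ (Real.one_le_exp (by linarith))
  rw [← Real.exp_add, add_comm u x, Real.log_div hφxu.ne' hφx.ne']

lemma isBounded_image_log_comp_exp (hφ : SlowlyVaryingM φ) (b : ℝ) :
    Bornology.IsBounded ((fun x => Real.log (φ (Real.exp x))) '' Icc 0 b) := by
  obtain ⟨-, hpos, hbdd, -⟩ := hφ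
  obtain ⟨C, -, hC⟩ := hbdd (Real.exp (max b 1)) (Real.one_lt_exp_iff.2 (by positivity))
  refine isBounded_iff_forall_norm_le.2 ⟨Real.log C, forall_mem_image.2 fun x ⟨hx₀, hxb⟩ => ?_⟩
  have hone : 1 ≤ Real.exp x := Real.one_le_exp hx₀
  obtain ⟨hφC, hφC'⟩ := hC _ ⟨hone, Real.exp_le_exp.2 (hxb.trans (le_max_left b 1))⟩
  have hupper := Real.log_le_log (hpos _ hone) hφC
  have hlower := Real.log_le_log (one_div_pos.2 (hpos _ hone)) hφC'
  rw [one_div, Real.log_inv] at hlower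
  exact abs_le.2 ⟨neg_le.1 hlower, hupper⟩

theorem potter_bound (hφ : SlowlyVaryingM φ) {ε : ℝ} (hε : 0 < ε) :
    ∃ C > 0, ∀ x ≥ 1, ∀ y ≥ 1, φ x ≤ C * max (x / y) (y / x) ^ ε * φ y := by
  obtain ⟨K, hK⟩ := hφ.vanishingIncrements_log_comp_exp.exists_norm_sub_le_add_mul_abs_sub
    hφ.stronglyMeasurable_log_comp_exp hφ.isBounded_image_log_comp_exp hε
  refine ⟨Real.exp K, Real.exp_pos K, fun x hx y hy => ?_⟩
  have hx₀ : 0 < x := one_pos.trans_le hx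
  have hy₀ : 0 < y := one_pos.trans_le hy
  have hlog := (le_abs_self _).trans (hK _ (Real.log_nonneg hx) _ (Real.log_nonneg hy))
  rw [Real.exp_log hx₀, Real.exp_log hy₀, sub_le_iff_le_add] at hlog
  calc φ x = Real.exp (Real.log (φ x)) := (Real.exp_log (hφ.2.1 x hx)).symm
    _ ≤ Real.exp (K + ε * |Real.log x - Real.log y| + Real.log (φ y)) := Real.exp_le_exp.2 hlog
    _ = Real.exp K * max (x / y) (y / x) ^ ε * φ y := by
        rw [Real.exp_add, Real.exp_add, Real.exp_log (hφ.2.1 y hy), mul_comm ε, Real.exp_mul,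
          exp_abs_log_sub_log hx₀ hy₀]

theorem rpow_mul_potter_bound (hφ : SlowlyVaryingM φ) (s : ℝ) {ε : ℝ} (hε : 0 < ε) :
    ∃ C > 0, ∀ x ≥ 1, ∀ y ≥ 1,
      x ^ s * φ x ≤ C * max (x / y) (y / x) ^ (|s| + ε) * y ^ s * φ y := by
  obtain ⟨C, hC, hφC⟩ := hφ.potter_bound hε
  refine ⟨C, hC, fun x hx y hy => ?_⟩
  have hx₀ : 0 < x := one_pos.trans_le hx
  have hy₀ : 0 < y := one_pos.trans_le hy
  have hφx : 0 < φ x := hφ.2.1 x hx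
  have hmax : 0 < max (x / y) (y / x) := lt_max_of_lt_left (div_pos hx₀ hy₀)
  calc x ^ s * φ x
      ≤ (max (x / y) (y / x) ^ |s| * y ^ s) * (C * max (x / y) (y / x) ^ ε * φ y) := by
        gcongr
        · exact rpow_le_max_div_rpow_abs_mul_rpow hx₀ hy₀ s
        · exact hφC x hx y hy
    _ = C * max (x / y) (y / x) ^ (|s| + ε) * y ^ s * φ y := by rw [Real.rpow_add hmax]; ring

end SlowlyVaryingM

section JapaneseBracket

variable {E : Type*} [SeminormedAddCommGroup E]

/-- The Japanese bracket `⟨ξ⟩ = (1 + ‖ξ‖²)^{1/2}` on an arbitrary seminormed group; on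
`EuclideanSpace ℝ (Fin n)` it is `jbracket`. -/
noncomputable def japaneseBracket (ξ : E) : ℝ :=
  √(1 + ‖ξ‖ ^ 2)

lemma one_le_japaneseBracket (ξ : E) : 1 ≤ japaneseBracket ξ :=
  Real.one_le_sqrt.2 (le_add_of_nonneg_right (sq_nonneg ‖ξ‖))

lemma japaneseBracket_sub_comm (ξ η : E) : japaneseBracket (ξ - η) = japaneseBracket (η - ξ) := by
  rw [japaneseBracket, norm_sub_rev, japaneseBracket]

lemma japaneseBracket_le_sqrt_two_mul_mul (ξ η : E) :
    japaneseBracket ξ ≤ √2 * japaneseBracket (ξ - η) * japaneseBracket η := by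
  have htriangle : ‖ξ‖ ^ 2 ≤ (‖ξ - η‖ + ‖η‖) ^ 2 := by
    gcongr
    exact norm_le_norm_sub_add ξ η
  rw [japaneseBracket, japaneseBracket, japaneseBracket, ← Real.sqrt_mul (by positivity),
    ← Real.sqrt_mul (by positivity)]
  gcongr
  nlinarith [sq_nonneg (‖ξ - η‖ - ‖η‖), sq_nonneg (‖ξ - η‖ * ‖η‖)]

lemma max_japaneseBracket_div_le (ξ η : E) :
    max (japaneseBracket ξ / japaneseBracket η) (japaneseBracket η / japaneseBracket ξ) ≤
      √2 * japaneseBracket (ξ - η) := by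
  have hpos (ζ : E) : 0 < japaneseBracket ζ := one_pos.trans_le (one_le_japaneseBracket ζ)
  refine max_le ((div_le_iff₀ (hpos η)).2 (japaneseBracket_le_sqrt_two_mul_mul ξ η))
    ((div_le_iff₀ (hpos ξ)).2 ?_)
  rw [japaneseBracket_sub_comm]
  exact japaneseBracket_le_sqrt_two_mul_mul η ξ

theorem peetre_type_two_weight_inequality_general
    {φ : ℝ → ℝ} (hφ : SlowlyVaryingM φ) (s : ℝ) {ε : ℝ} (hε : 0 < ε) :
    ∃ C : ℝ, 0 < C ∧ ∀ ξ η : E,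
      japaneseBracket ξ ^ s * φ (japaneseBracket ξ) ≤
        C * japaneseBracket (ξ - η) ^ (|s| + ε) * japaneseBracket η ^ s *
          φ (japaneseBracket η) := by
  obtain ⟨C, hC, hφC⟩ := hφ.rpow_mul_potter_bound s hε
  refine ⟨C * √2 ^ (|s| + ε), by positivity, fun ξ η => ?_⟩
  have hξ := one_le_japaneseBracket ξ
  have hη := one_le_japaneseBracket η
  have hφη : 0 < φ (japaneseBracket η) := hφ.2.1 _ hη
  calc japaneseBracket ξ ^ s * φ (japaneseBracket ξ)
      ≤ C * max (japaneseBracket ξ / japaneseBracket η) (japaneseBracket η / japaneseBracket ξ) ^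
          (|s| + ε) * japaneseBracket η ^ s * φ (japaneseBracket η) := hφC _ hξ _ hη
    _ ≤ C * (√2 * japaneseBracket (ξ - η)) ^ (|s| + ε) * japaneseBracket η ^ s *
          φ (japaneseBracket η) := by
        gcongr
        exact max_japaneseBracket_div_le ξ η
    _ = C * √2 ^ (|s| + ε) * japaneseBracket (ξ - η) ^ (|s| + ε) * japaneseBracket η ^ s *
          φ (japaneseBracket η) := by
        rw [Real.mul_rpow (Real.sqrt_nonneg 2) (zero_le_one.trans (one_le_japaneseBracket _)),
          mul_assoc C (√2 ^ _)]

end JapaneseBracket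

/-- Peetre-type two-weight inequality for the refined weights
`⟨ξ⟩^s φ(⟨ξ⟩)`. -/
theorem peetre_type_two_weight_inequality
    (φ : ℝ → ℝ) (hφ : SlowlyVaryingM φ) (s ε : ℝ) (hε : 0 < ε)
    (n : ℕ) (hn : 1 ≤ n) :
    ∃ C : ℝ, 0 < C ∧ ∀ ξ η : EuclideanSpace ℝ (Fin n),
      jbracket ξ ^ s * φ (jbracket ξ)
        ≤ C * jbracket (ξ - η) ^ (|s| + ε) * jbracket η ^ s * φ (jbracket η) :=
  peetre_type_two_weight_inequality_general hφ s hε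
end
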